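/- Let m ≥ 1, n ≥ 1, D ≥ 1 be integers. For every positive integer N there exists a constant C depending only on m, n, D, N such that the following holds. Let S ⊆ ℝ^n be a finite set with |S| ≤ N and diameter at most 1, and for each x ∈ S let G(x) ⊆ 𝒫⃗ be a nonempty convex set. Then there exists S′ ⊆ S with |S′| ≤ 2^(D·binom(n+m−1, n)) such that ‖(G(x))_{x∈S}‖_{W^m(S)} ≤ C·‖(G(x))_{x∈S′}‖_{W^m(S′)}, where for any finite T ⊆ ℝ^n, ‖(G(x))_{x∈T}‖_{W^m(T)} := inf { ‖(P⃗^x)_{x∈T}‖_{W^m(T)} : P⃗^x ∈ G(x) for all x ∈ T }. -/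

import Mathlib

open scoped BigOperators Classical

noncomputable section

/-- `En n` is Euclidean space `ℝ^n`. -/
abbrev En (n : ℕ) : Type := EuclideanSpace ℝ (Fin n)

/-- First-order partial derivative `∂_i f` in the `i`-th coordinate direction. -/
noncomputable def pd1 {n : ℕ} (i : Fin n) (f : En n → ℝ) : En n → ℝ :=
  fun x => fderiv ℝ f x (EuclideanSpace.single i 1)

/-- Higher-order partial derivative `∂^α f` for a multi-index `α`. -/
noncomputable def pdalpha {n : ℕ} (α : Fin n → ℕ) (f : En n → ℝ) : En n → ℝ :=
  (List.finRange n).foldr (fun i g => (pd1 i)^[α i] g) f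

/-- First-order partial derivative within a set `s`. -/
noncomputable def pd1W {n : ℕ} (s : Set (En n)) (i : Fin n) (f : En n → ℝ) : En n → ℝ :=
  fun x => fderivWithin ℝ f s x (EuclideanSpace.single i 1)

/-- Higher-order partial derivative `∂^α f` within a set `s`. -/
noncomputable def pdalphaW {n : ℕ} (s : Set (En n)) (α : Fin n → ℕ) (f : En n → ℝ) : En n → ℝ :=
  (List.finRange n).foldr (fun i g => (pd1W s i)^[α i] g) f

/-- `∂^α` of a multivariate polynomial (formal derivative). -/
noncomputable def polyPD {n : ℕ} (α : Fin n → ℕ) (p : MvPolynomial (Fin n) ℝ) :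
    MvPolynomial (Fin n) ℝ :=
  (List.finRange n).foldr (fun i q => (fun r => MvPolynomial.pderiv i r)^[α i] q) p

/-- The value `∂^α p (x)` of the `α`-th derivative of a polynomial at `x`. -/
noncomputable def polyPDval {n : ℕ} (α : Fin n → ℕ) (p : MvPolynomial (Fin n) ℝ) (x : En n) : ℝ :=
  MvPolynomial.eval (fun i => x i) (polyPD α p)

/-- The `(m-1)`-jet (Taylor polynomial of degree `≤ m-1`) of `f` at `x`. -/
noncomputable def jetScalar (m : ℕ) {n : ℕ} (f : En n → ℝ) (x : En n) :
    MvPolynomial (Fin n) ℝ :=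
  ∑ α ∈ (Finset.univ : Finset (Fin n → Fin m)).filter (fun α => (∑ i, (α i : ℕ)) ≤ m - 1),
    MvPolynomial.C (pdalpha (fun i => (α i : ℕ)) f x / ((∏ i, Nat.factorial (α i : ℕ) : ℕ) : ℝ))
      * ∏ i, (MvPolynomial.X i - MvPolynomial.C (x i)) ^ ((α i : ℕ))

/-- The `(m-1)`-jet of `f` at `x`, with derivatives taken within a set `s`. -/
noncomputable def jetScalarW (m : ℕ) {n : ℕ} (s : Set (En n)) (f : En n → ℝ) (x : En n) :
    MvPolynomial (Fin n) ℝ :=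
  ∑ α ∈ (Finset.univ : Finset (Fin n → Fin m)).filter (fun α => (∑ i, (α i : ℕ)) ≤ m - 1),
    MvPolynomial.C (pdalphaW s (fun i => (α i : ℕ)) f x / ((∏ i, Nat.factorial (α i : ℕ) : ℕ) : ℝ))
      * ∏ i, (MvPolynomial.X i - MvPolynomial.C (x i)) ^ ((α i : ℕ))

/-- The vector-valued `(m-1)`-jet `J_x F ∈ 𝒫⃗` of `F : ℝ^n → ℝ^D` at `x`. -/
noncomputable def jetD (m : ℕ) {n D : ℕ} (F : En n → Fin D → ℝ) (x : En n) :
    Fin D → MvPolynomial (Fin n) ℝ :=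
  fun j => jetScalar m (fun y => F y j) x

/-- The vector-valued `(m-1)`-jet of `F` at `x`, derivatives within `s`. -/
noncomputable def jetDW (m : ℕ) {n D : ℕ} (s : Set (En n)) (F : En n → Fin D → ℝ) (x : En n) :
    Fin D → MvPolynomial (Fin n) ℝ :=
  fun j => jetScalarW m s (fun y => F y j) x

/-- Truncation of a polynomial to total degree `≤ k`. -/
noncomputable def truncDeg {n : ℕ} (k : ℕ) (p : MvPolynomial (Fin n) ℝ) :
    MvPolynomial (Fin n) ℝ :=
  ∑ s ∈ p.support.filter (fun s => (s.sum fun _ e => e) ≤ k),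
    MvPolynomial.monomial s (MvPolynomial.coeff s p)

/-- The degree-`k` Taylor truncation of a polynomial at `x` (the jet `J_x p` of order `k`). -/
noncomputable def taylorTrunc {n : ℕ} (k : ℕ) (x : En n) (p : MvPolynomial (Fin n) ℝ) :
    MvPolynomial (Fin n) ℝ :=
  MvPolynomial.bind₁ (fun i => MvPolynomial.X i - MvPolynomial.C (x i))
    (truncDeg k (MvPolynomial.bind₁ (fun i => MvPolynomial.X i + MvPolynomial.C (x i)) p))

/-- The ring multiplication `p ⊙_x q := J_x(pq)` on degree-`k` jets at `x`. -/
noncomputable def odot {n : ℕ} (k : ℕ) (x : En n) (p q : MvPolynomial (Fin n) ℝ) :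
    MvPolynomial (Fin n) ℝ :=
  taylorTrunc k x (p * q)

/-- `(Γ x M)_{x ∈ E, M > 0}` is a shape field with jets of degree `≤ k` and `d` components:
each `Γ x M` is a convex set of `d`-tuples of polynomials of degree `≤ k`, monotone in `M`. -/
def IsShapeField {N : ℕ} (k d : ℕ) (E : Finset (En N))
    (Γ : En N → ℝ → Set (Fin d → MvPolynomial (Fin N) ℝ)) : Prop :=
  (∀ x ∈ E, ∀ M : ℝ, 0 < M → Convex ℝ (Γ x M)) ∧
  (∀ x ∈ E, ∀ M : ℝ, 0 < M → ∀ P ∈ Γ x M, ∀ j, (P j).totalDegree ≤ k) ∧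
  (∀ x ∈ E, ∀ M' M : ℝ, 0 < M' → M' ≤ M → Γ x M' ⊆ Γ x M)

/-- `(C_w, δmax)`-convexity of a shape field with jets of degree `≤ k`. -/
def SFConvex {N : ℕ} (k d : ℕ) (E : Finset (En N))
    (Γ : En N → ℝ → Set (Fin d → MvPolynomial (Fin N) ℝ)) (Cw δmax : ℝ) : Prop :=
  ∀ δ : ℝ, 0 < δ → δ ≤ δmax → ∀ x ∈ E, ∀ M : ℝ, 0 < M →
    ∀ P₁ P₂ : Fin d → MvPolynomial (Fin N) ℝ, P₁ ∈ Γ x M → P₂ ∈ Γ x M →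
    ∀ Q₁ Q₂ : MvPolynomial (Fin N) ℝ, Q₁.totalDegree ≤ k → Q₂.totalDegree ≤ k →
    (∀ α : Fin N → ℕ, (∑ i, α i) ≤ k → ∀ j,
      |polyPDval α (P₁ j - P₂ j) x| ≤ M * δ ^ (k + 1 - ∑ i, α i)) →
    (∀ α : Fin N → ℕ, (∑ i, α i) ≤ k →
      |polyPDval α Q₁ x| ≤ δ ^ (-((∑ i, α i : ℕ) : ℤ)) ∧
      |polyPDval α Q₂ x| ≤ δ ^ (-((∑ i, α i : ℕ) : ℤ))) →
    odot k x Q₁ Q₁ + odot k x Q₂ Q₂ = 1 →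
    (fun j => odot k x (odot k x Q₁ Q₁) (P₁ j) + odot k x (odot k x Q₂ Q₂) (P₂ j))
      ∈ Γ x (Cw * M)

/-- `‖(P^x)_{x ∈ S}‖_{Ẇ^m(S)} ≤ M` : the homogeneous Whitney seminorm bound. -/
def WSemiLE (m : ℕ) {N d : ℕ} (S : Finset (En N))
    (P : En N → Fin d → MvPolynomial (Fin N) ℝ) (M : ℝ) : Prop :=
  ∀ x ∈ S, ∀ y ∈ S, x ≠ y → ∀ α : Fin N → ℕ, (∑ i, α i) ≤ m - 1 → ∀ j,
    |polyPDval α (P x j - P y j) x| ≤ M * dist x y ^ (m - ∑ i, α i)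

/-- The homogeneous Whitney seminorm `‖(P^x)_{x ∈ S}‖_{Ẇ^m(S)}`. -/
noncomputable def WNormHomog (m : ℕ) {N d : ℕ} (S : Finset (En N))
    (P : En N → Fin d → MvPolynomial (Fin N) ℝ) : ℝ :=
  sSup {r : ℝ | ∃ x ∈ S, ∃ y ∈ S, x ≠ y ∧ ∃ α : Fin N → ℕ, (∑ i, α i) ≤ m - 1 ∧ ∃ j : Fin d,
    r = |polyPDval α (P x j - P y j) x| / dist x y ^ (m - ∑ i, α i)}

/-- The lower-order part of the Whitney norm. -/
noncomputable def WNormLow (m : ℕ) {N d : ℕ} (S : Finset (En N))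
    (P : En N → Fin d → MvPolynomial (Fin N) ℝ) : ℝ :=
  sSup {r : ℝ | ∃ x ∈ S, ∃ α : Fin N → ℕ, (∑ i, α i) ≤ m - 1 ∧ ∃ j : Fin d,
    r = |polyPDval α (P x j) x|}

/-- The Whitney norm `‖(P^x)_{x ∈ S}‖_{W^m(S)}`. -/
noncomputable def WNormFull (m : ℕ) {N d : ℕ} (S : Finset (En N))
    (P : En N → Fin d → MvPolynomial (Fin N) ℝ) : ℝ :=
  WNormLow m S P + WNormHomog m S P

/-- `‖F‖_{C^m} ≤ M`: all partials of order `≤ m` of all components bounded by `M`. -/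
def CmLE (m : ℕ) {n D : ℕ} (F : En n → Fin D → ℝ) (M : ℝ) : Prop :=
  ∀ α : Fin n → ℕ, (∑ i, α i) ≤ m → ∀ x : En n, ∀ j, |pdalpha α (fun y => F y j) x| ≤ M

/-- `‖F‖_{Ċ^m} ≤ M`: all partials of order `= m` of all components bounded by `M`. -/
def CmHomogLE (m : ℕ) {n D : ℕ} (F : En n → Fin D → ℝ) (M : ℝ) : Prop :=
  ∀ α : Fin n → ℕ, (∑ i, α i) = m → ∀ x : En n, ∀ j, |pdalpha α (fun y => F y j) x| ≤ M

/-- `‖F‖_{C^{m-1,1}} ≤ M`. -/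
def Cm11LE (m : ℕ) {n D : ℕ} (F : En n → Fin D → ℝ) (M : ℝ) : Prop :=
  (∀ α : Fin n → ℕ, (∑ i, α i) ≤ m - 1 → ∀ x : En n, ∀ j,
    |pdalpha α (fun y => F y j) x| ≤ M) ∧
  (∀ α : Fin n → ℕ, (∑ i, α i) = m - 1 → ∀ j, ∀ x y : En n,
    |pdalpha α (fun z => F z j) x - pdalpha α (fun z => F z j) y| ≤ M * dist x y)

/-- A closed cube in `ℝ^n` with lower corner `a` and side length `δ`. -/
def cube {n : ℕ} (a : En n) (δ : ℝ) : Set (En n) := {y | ∀ i, a i ≤ y i ∧ y i ≤ a i + δ}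

/-- The embedding `ℝ^n → ℝ^{n+D}`, `x ↦ (x, 0)`. -/
noncomputable def embed (n D : ℕ) (x : En n) : En (n + D) :=
  (EuclideanSpace.equiv (Fin (n + D)) ℝ).symm
    (Fin.append (fun i : Fin n => x i) (fun _ : Fin D => (0 : ℝ)))

/-- The projection `ℝ^{n+D} → ℝ^n`, `(x, ξ) ↦ x`. -/
noncomputable def projn (n D : ℕ) (z : En (n + D)) : En n :=
  (EuclideanSpace.equiv (Fin n) ℝ).symm (fun i => z (Fin.castAdd D i))

/-- Restriction of a polynomial on `ℝ^{n+D}` to `ℝ^n × {0}`, as a polynomial on `ℝ^n`. -/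
noncomputable def restrict0 (n D : ℕ) (p : MvPolynomial (Fin (n + D)) ℝ) :
    MvPolynomial (Fin n) ℝ :=
  MvPolynomial.aeval
    (Fin.append (fun i : Fin n => (MvPolynomial.X i : MvPolynomial (Fin n) ℝ))
      (fun _ : Fin D => 0)) p


/-- The selection norm `‖(G(x))_{x∈T}‖_{W^m(T)}`: the infimum of Whitney norms of
selections of the family `(G x)_{x ∈ T}`. -/
noncomputable def selNormFull (m : ℕ) {N d : ℕ} (T : Finset (En N))
    (G : En N → Set (Fin d → MvPolynomial (Fin N) ℝ)) : ℝ :=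
  sInf {r : ℝ | ∃ P : En N → Fin d → MvPolynomial (Fin N) ℝ,
    (∀ x ∈ T, P x ∈ G x) ∧ r = WNormFull m T P}

/-!
Suppose `S` has more than `2 ^ K` points, where `K = dim 𝒫⃗`. Peeling off the smaller part of a well
separated bipartition again and again decomposes `S` into `K + 2` levels such that the diameter of
the union of a level and all later ones is comparable to the distance from that level to the later
ones. For each level `i` take a near-optimal selection `P i` on the points of `S` outside level `i`,
and a reference point `z i` in one of the last two levels, but not in level `i`. By Radon's theorem
the `K + 2` values `P i (z i) ∈ 𝒫⃗` split into two groups with a common convex combination `q`.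
Averaging the `P i` with the weights of one group is meaningful on every level not indexed by that
group, so the two averages together give a selection on all of `S`. Two points governed by different
averages lie in different levels, hence their distance controls their distances to the reference
points, and comparing both averages with `q` bounds the difference of their jets. So removing some
level changes the selection norm by at most a constant factor, and this is repeated until at most
`2 ^ K` points are left.
-/

section Polynomial

open MvPolynomial

lemma coeff_iterate_pderiv {σ R : Type*} [CommSemiring R] (i : σ) (k : ℕ) (p : MvPolynomial σ R)
    (s : σ →₀ ℕ) :
    coeff s ((fun r => pderiv i r)^[k] p) =
      coeff (s + Finsupp.single i k) p * (s i + 1).ascFactorial k := by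
  induction k generalizing p with
  | zero => simp
  | succ k ih =>
    rw [Function.iterate_succ_apply, ih, coeff_pderiv, Nat.ascFactorial_succ, add_assoc,
      ← Finsupp.single_add]
    simp only [Finsupp.add_apply, Finsupp.single_eq_same]
    push_cast
    ring

variable {n : ℕ}

lemma coeff_foldr_iterate_pderiv (α : Fin n → ℕ) (p : MvPolynomial (Fin n) ℝ) {l : List (Fin n)}
    (hl : l.Nodup) (s : Fin n →₀ ℕ) :
    coeff s (l.foldr (fun i q => (fun r => pderiv i r)^[α i] q) p) =
      coeff (s + (l.map fun i => Finsupp.single i (α i)).sum) p *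
        (l.map fun i => ((s i + 1).ascFactorial (α i) : ℝ)).prod := by
  induction l generalizing s with
  | nil => simp
  | cons i l ih =>
    obtain ⟨hi, hl⟩ := List.nodup_cons.mp hl
    have map_eq : (l.map fun j => (((s + Finsupp.single i (α i)) j + 1).ascFactorial (α j) : ℝ)) =
        l.map fun j => ((s j + 1).ascFactorial (α j) : ℝ) :=
      List.map_congr_left fun j hj => by
        rw [Finsupp.add_apply, Finsupp.single_eq_of_ne (ne_of_mem_of_not_mem hj hi), add_zero]
    rw [List.foldr_cons, coeff_iterate_pderiv, ih hl, map_eq, List.map_cons, List.sum_cons,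
      List.map_cons, List.prod_cons, add_assoc]
    ring

/-- Reading off coefficients makes the order of differentiation in `polyPD` irrelevant, so partial
derivatives never have to be commuted. -/
lemma coeff_polyPD (α : Fin n → ℕ) (p : MvPolynomial (Fin n) ℝ) (s : Fin n →₀ ℕ) :
    coeff s (polyPD α p) =
      coeff (s + Finsupp.equivFunOnFinite.symm α) p * ∏ i, ((s i + 1).ascFactorial (α i) : ℝ) := by
  have sum_single : ((List.finRange n).map fun i => Finsupp.single i (α i)).sum =
      Finsupp.equivFunOnFinite.symm α := by
    rw [Finsupp.equivFunOnFinite_symm_eq_sum, ← List.ofFn_eq_map, List.sum_ofFn]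
  rw [polyPD, coeff_foldr_iterate_pderiv α p (List.nodup_finRange n), sum_single,
    ← List.ofFn_eq_map, List.prod_ofFn]

lemma polyPD_add (α : Fin n → ℕ) (p q : MvPolynomial (Fin n) ℝ) :
    polyPD α (p + q) = polyPD α p + polyPD α q := by
  ext s
  simp only [coeff_polyPD, coeff_add, add_mul]

lemma polyPD_smul (α : Fin n → ℕ) (c : ℝ) (p : MvPolynomial (Fin n) ℝ) :
    polyPD α (c • p) = c • polyPD α p := by
  ext s
  simp only [coeff_polyPD, coeff_smul, smul_mul_assoc]

lemma polyPD_eq_zero_of_totalDegree_lt {α : Fin n → ℕ} {p : MvPolynomial (Fin n) ℝ}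
    (h : p.totalDegree < ∑ i, α i) : polyPD α p = 0 := by
  ext s
  have : p.totalDegree < (s + Finsupp.equivFunOnFinite.symm α).degree := by
    rw [Finsupp.degree_eq_sum]
    exact h.trans_le (Finset.sum_le_sum fun i _ => Nat.le_add_left _ _)
  rw [coeff_polyPD, coeff_eq_zero_of_totalDegree_lt this, zero_mul, coeff_zero]

lemma pderiv_polyPD (i : Fin n) (α : Fin n → ℕ) (p : MvPolynomial (Fin n) ℝ) :
    pderiv i (polyPD α p) = polyPD (α + Pi.single i 1) p := by
  ext s
  have index_eq : s + Finsupp.single i 1 + Finsupp.equivFunOnFinite.symm α =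
      s + Finsupp.equivFunOnFinite.symm (α + Pi.single i 1) := by
    ext j
    simp [Finsupp.single_eq_pi_single, add_comm, add_left_comm]
  have factor_eq : (((s i + 1 + 1).ascFactorial (α i) : ℕ) : ℝ) * (s i + 1) =
      ((s i + 1).ascFactorial (α i + 1) : ℕ) := by
    rw [Nat.ascFactorial_succ, ← Nat.succ_ascFactorial]
    push_cast
    ring
  have prod_eq :
      (∏ j, (((s + Finsupp.single i 1 : Fin n →₀ ℕ) j + 1).ascFactorial (α j) : ℝ)) * (s i + 1) =
      ∏ j, ((s j + 1).ascFactorial ((α + Pi.single i 1 : Fin n → ℕ) j) : ℝ) := by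
    rw [← Finset.mul_prod_erase _ _ (Finset.mem_univ i),
      ← Finset.mul_prod_erase _ _ (Finset.mem_univ i), mul_right_comm]
    refine congr_arg₂ _ (by simpa using factor_eq) (Finset.prod_congr rfl fun j hj => ?_)
    simp [Finset.ne_of_mem_erase hj]
  rw [coeff_pderiv, coeff_polyPD, coeff_polyPD, index_eq, mul_assoc, prod_eq]

/-- The functional `p ↦ ∂^α p (x)` as a linear map. -/
def polyPDvalₗ (α : Fin n → ℕ) (x : En n) : MvPolynomial (Fin n) ℝ →ₗ[ℝ] ℝ where
  toFun p := polyPDval α p x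
  map_add' p q := by simp only [polyPDval, polyPD_add, map_add]
  map_smul' c p := by simp only [polyPDval, polyPD_smul, smul_eval, smul_eq_mul, RingHom.id_apply]

lemma polyPDvalₗ_apply (α : Fin n → ℕ) (x : En n) (p : MvPolynomial (Fin n) ℝ) :
    polyPDvalₗ α x p = polyPDval α p x := rfl

lemma hasFDerivAt_eval {ι : Type*} [Fintype ι] (p : MvPolynomial ι ℝ) (x : EuclideanSpace ℝ ι) :
    HasFDerivAt (fun y : EuclideanSpace ℝ ι => eval (fun i => y i) p)
      (∑ i, eval (fun i => x i) (pderiv i p) •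
        (EuclideanSpace.proj i : EuclideanSpace ℝ ι →L[ℝ] ℝ)) x := by
  induction p using MvPolynomial.induction_on with
  | C a => simpa using hasFDerivAt_const a x
  | add p q hp hq =>
    simp only [map_add, add_smul, Finset.sum_add_distrib]
    exact hp.add hq
  | mul_X p j hp =>
    have hX : HasFDerivAt (fun y : EuclideanSpace ℝ ι => y j)
        (EuclideanSpace.proj j : EuclideanSpace ℝ ι →L[ℝ] ℝ) x :=
      (EuclideanSpace.proj j : EuclideanSpace ℝ ι →L[ℝ] ℝ).hasFDerivAt
    simp only [map_mul, eval_X]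
    refine (hp.mul hX).congr_fderiv ?_
    ext v
    simp [pderiv_X, Pi.single_apply, add_mul, Finset.sum_add_distrib, Finset.mul_sum, apply_ite,
      mul_assoc]

lemma abs_eval_sub_le_of_abs_pderiv_le {ι : Type*} [Fintype ι] {p : MvPolynomial ι ℝ}
    {s : Set (EuclideanSpace ℝ ι)} (hs : Convex ℝ s) {B : ℝ}
    (hB : ∀ w ∈ s, ∀ i, |eval (fun i => w i) (pderiv i p)| ≤ B)
    {x y : EuclideanSpace ℝ ι} (hx : x ∈ s) (hy : y ∈ s) :
    |eval (fun i => x i) p - eval (fun i => y i) p| ≤ Fintype.card ι * B * dist x y := by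
  rw [dist_eq_norm]
  refine hs.norm_image_sub_le_of_norm_hasFDerivWithin_le
    (fun w _ => (hasFDerivAt_eval p w).hasFDerivWithinAt) (fun w hw => ?_) hy hx
  have norm_proj_le (i : ι) : ‖(EuclideanSpace.proj i : EuclideanSpace ℝ ι →L[ℝ] ℝ)‖ ≤ 1 :=
    ContinuousLinearMap.opNorm_le_bound _ zero_le_one fun v => by
      simpa using PiLp.norm_apply_le v i
  have norm_term_le (i : ι) : ‖eval (fun i => w i) (pderiv i p) •
      (EuclideanSpace.proj i : EuclideanSpace ℝ ι →L[ℝ] ℝ)‖ ≤ B := by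
    rw [norm_smul]
    exact (mul_le_of_le_one_right (norm_nonneg _) (norm_proj_le i)).trans (hB w hw i)
  simpa using norm_sum_le_of_le Finset.univ fun i _ => norm_term_le i

lemma finrank_restrictTotalDegree (σ R : Type*) [Fintype σ] [CommRing R] [Nontrivial R] (k : ℕ) :
    Module.finrank R (restrictTotalDegree σ R k) = (Fintype.card σ + k).choose k := by
  let e : {s : σ →₀ ℕ | s.degree ≤ k} ≃
      (Finset.univ : Finset (Option σ)).finsuppAntidiag k :=
    { toFun s := ⟨s.1.optionElim (k - s.1.degree), by
        have hs : s.1.degree ≤ k := s.2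
        simp [Fintype.sum_option, ← Finsupp.degree_eq_sum, Nat.sub_add_cancel hs]⟩
      invFun t := ⟨t.1.some, by
        have ht := (Finset.mem_finsuppAntidiag.mp t.2).1
        rw [Fintype.sum_option] at ht
        simpa [Finsupp.degree_eq_sum] using Nat.le_of_add_left_le ht.le⟩
      left_inv s := by simp
      right_inv t := by
        have ht := (Finset.mem_finsuppAntidiag.mp t.2).1
        rw [Fintype.sum_option] at ht
        ext (_ | i)
        · simp [Finsupp.degree_eq_sum, ← ht]
        · simp }
  calc Module.finrank R (restrictTotalDegree σ R k)
      = Nat.card {s : σ →₀ ℕ | s.degree ≤ k} :=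
        Module.finrank_eq_nat_card_basis (basisRestrictSupport R _)
    _ = (Fintype.card σ + k).choose k := by
      rw [Nat.card_congr e, Nat.card_eq_fintype_card, Fintype.card_coe,
        Finset.card_finsuppAntidiag_nat_eq_choose, Finset.card_univ, Fintype.card_option,
        Nat.add_right_comm, Nat.add_sub_cancel]

end Polynomial


section Layering

lemma exists_gap {ι : Type*} (s : Finset ι) (f : ι → ℝ) {ε : ℝ} (hε : 0 < ε) :
    ∃ k ≤ s.card, ∀ i ∈ s, f i ≤ k * ε ∨ (k + 1) * ε < f i := by
  have card_lt : (s.image fun i => ⌈f i / ε⌉₊).card < (Finset.Icc 1 (s.card + 1)).card := by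
    simpa using Nat.lt_succ_of_le (Finset.card_image_le (s := s) (f := fun i => ⌈f i / ε⌉₊))
  obtain ⟨j, hj, hj_notMem⟩ := Finset.exists_mem_notMem_of_card_lt_card card_lt
  obtain ⟨hj_pos, hj_le⟩ := Finset.mem_Icc.mp hj
  obtain ⟨k, rfl⟩ := Nat.exists_eq_add_of_le' hj_pos
  refine ⟨k, Nat.le_of_succ_le_succ hj_le, fun i hi => ?_⟩
  have ceil_ne : ⌈f i / ε⌉₊ ≠ k + 1 := fun h => hj_notMem (Finset.mem_image.mpr ⟨i, hi, h⟩)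
  rcases ceil_ne.lt_or_gt with h | h
  · exact Or.inl ((div_le_iff₀ hε).mp (Nat.ceil_le.mp (Nat.le_of_lt_succ h)))
  · exact Or.inr ((lt_div_iff₀ hε).mp (by exact_mod_cast Nat.lt_ceil.mp h))

variable {X : Type*} [MetricSpace X]

lemma exists_separated_subset {S : Finset X} (hS : S.Nontrivial) :
    ∃ B ⊆ S, B.Nonempty ∧ (S \ B).Nonempty ∧
      ∀ x ∈ S \ B, ∀ y ∈ B, ∀ z ∈ S, ∀ w ∈ S, dist z w ≤ S.card * dist x y := by
  obtain ⟨⟨a, b⟩, hab, dist_le⟩ :=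
    (S ×ˢ S).exists_max_image (fun p => dist p.1 p.2) (hS.nonempty.product hS.nonempty)
  obtain ⟨ha, hb⟩ := Finset.mem_product.mp hab
  have diam_pos : 0 < dist a b := by
    obtain ⟨u, hu, v, hv, huv⟩ := hS
    exact (dist_pos.mpr huv).trans_le (dist_le (u, v) (Finset.mk_mem_product hu hv))
  have card_pos : (0 : ℝ) < S.card := by exact_mod_cast hS.nonempty.card_pos
  set ε := dist a b / S.card with hε
  have card_mul_ε : S.card * ε = dist a b := mul_div_cancel₀ _ card_pos.ne'
  have ε_pos : 0 < ε := div_pos diam_pos card_pos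
  obtain ⟨k, hk, gap⟩ := exists_gap (S.erase a) (dist a) ε_pos
  have hk_card : (k + 1 : ℝ) ≤ S.card := by
    exact_mod_cast (Nat.succ_le_succ hk).trans (Finset.card_erase_add_one ha).le
  refine ⟨S.filter (dist a · ≤ k * ε), Finset.filter_subset _ _,
    ⟨a, Finset.mem_filter.mpr ⟨ha, by rw [dist_self]; positivity⟩⟩,
    ⟨b, ?_⟩, fun x hx y hy z hz w hw => ?_⟩
  · simp only [Finset.mem_sdiff, Finset.mem_filter, hb, true_and, not_le, ← card_mul_ε]
    exact mul_lt_mul_of_pos_right (by linarith) ε_pos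
  · simp only [Finset.mem_sdiff, Finset.mem_filter, not_and] at hx hy
    have hxa : x ≠ a := by
      rintro rfl
      exact hx.2 hx.1 (by rw [dist_self]; positivity)
    have far : (k + 1) * ε < dist a x :=
      (gap x (Finset.mem_erase.mpr ⟨hxa, hx.1⟩)).resolve_left (hx.2 hx.1)
    have separated : ε ≤ dist x y := by
      linarith [dist_triangle a y x, dist_comm x y, hy.2]
    calc dist z w ≤ dist a b := dist_le (z, w) (Finset.mk_mem_product hz hw)
      _ = S.card * ε := card_mul_ε.symm
      _ ≤ S.card * dist x y := by gcongr

/-- A decomposition of the finite set `S` into `k + 1` nonempty levels `f = 0, …, f = k` such that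
the union of the levels `≥ i` has diameter at most `L` times the distance between level `i` and the
levels `> i`. Values of `f` outside `S` are irrelevant. -/
structure IsSeparatedLayering (S : Finset X) {k : ℕ} (f : X → Fin (k + 1)) (L : ℝ) : Prop where
  surj : ∀ i, ∃ x ∈ S, f x = i
  dist_le : ∀ x ∈ S, ∀ y ∈ S, f x < f y → ∀ z ∈ S, ∀ w ∈ S, f x ≤ f z → f x ≤ f w →
    dist z w ≤ L * dist x y

lemma IsSeparatedLayering.cons {S B : Finset X} {k : ℕ} {f : X → Fin (k + 1)} {L : ℝ} (hB : B ⊆ S)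
    (hne : (S \ B).Nonempty) (hf : IsSeparatedLayering B f L)
    (hL : ∀ x ∈ S \ B, ∀ y ∈ B, ∀ z ∈ S, ∀ w ∈ S, dist z w ≤ L * dist x y) :
    IsSeparatedLayering S (fun x => if x ∈ B then (f x).succ else 0) L where
  surj i := by
    cases i using Fin.cases with
    | zero =>
      obtain ⟨x, hx⟩ := hne
      exact ⟨x, (Finset.mem_sdiff.mp hx).1, if_neg (Finset.mem_sdiff.mp hx).2⟩
    | succ i =>
      obtain ⟨x, hx, rfl⟩ := hf.surj i
      exact ⟨x, hB hx, if_pos hx⟩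
  dist_le x hx y _ hxy z hz w hw hxz hxw := by
    have hyB : y ∈ B := by
      by_contra h
      simp [h] at hxy
    by_cases hxB : x ∈ B
    · have mem_of_le {v : X} (h : (if x ∈ B then (f x).succ else 0) ≤
          if v ∈ B then (f v).succ else 0) : v ∈ B := by
        by_contra hv
        simp [hxB, hv] at h
      have hzB := mem_of_le hxz
      have hwB := mem_of_le hxw
      simp only [hxB, hyB, hzB, hwB, if_true, Fin.succ_lt_succ_iff, Fin.succ_le_succ_iff]
        at hxy hxz hxw
      exact hf.dist_le x hxB y hyB hxy z hzB w hwB hxz hxw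
    · exact hL x (Finset.mem_sdiff.mpr ⟨hx, hxB⟩) y hyB z hz w hw

/-- Levels are peeled off by repeatedly keeping the larger part of a separated bipartition. -/
lemma exists_isSeparatedLayering {k : ℕ} {S : Finset X} {L : ℝ} (hL : S.card ≤ L)
    (hk : 2 ^ k < 2 * S.card) : ∃ f : X → Fin (k + 1), IsSeparatedLayering S f L := by
  induction k generalizing S with
  | zero =>
    obtain ⟨a, ha⟩ := Finset.card_pos.mp (show 0 < S.card by omega)
    exact ⟨fun _ => 0, fun i => ⟨a, ha, (Fin.fin_one_eq_zero i).symm⟩,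
      fun x _ y _ hxy => (lt_irrefl _ hxy).elim⟩
  | succ k ih =>
    have card_gt : 2 ^ k < S.card := by omega
    have hS : S.Nontrivial :=
      Finset.one_lt_card_iff_nontrivial.mp (Nat.one_le_two_pow.trans_lt card_gt)
    obtain ⟨B, hBS, hB, hB', separated⟩ := exists_separated_subset hS
    have extend {T : Finset X} (hTS : T ⊆ S) (hne : (S \ T).Nonempty) (hT : S.card ≤ 2 * T.card)
        (hsep : ∀ x ∈ S \ T, ∀ y ∈ T, ∀ z ∈ S, ∀ w ∈ S, dist z w ≤ S.card * dist x y) :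
        ∃ f : X → Fin (k + 1 + 1), IsSeparatedLayering S f L := by
      have card_le : (T.card : ℝ) ≤ L := hL.trans' (by exact_mod_cast Finset.card_le_card hTS)
      obtain ⟨f, hf⟩ := ih card_le (card_gt.trans_le hT)
      exact ⟨_, hf.cons hTS hne fun x hx y hy z hz w hw =>
        (hsep x hx y hy z hz w hw).trans (by gcongr)⟩
    have card_add := Finset.card_sdiff_add_card_eq_card hBS
    rcases le_total (S \ B).card B.card with h | h
    · exact extend hBS hB' (by omega) separated
    · rw [← Finset.sdiff_sdiff_eq_self hBS] at hB
      refine extend Finset.sdiff_subset hB (by omega) fun x hx y hy z hz w hw => ?_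
      rw [Finset.sdiff_sdiff_eq_self hBS] at hx
      rw [dist_comm x y]
      exact separated y hy x hx z hz w hw

lemma IsSeparatedLayering.dist_le_of_ne {S : Finset X} {k : ℕ} {f : X → Fin (k + 2)} {L : ℝ}
    (hf : IsSeparatedLayering S f L) {x y z : X} (hx : x ∈ S) (hy : y ∈ S) (hz : z ∈ S)
    (hxy : f x ≠ f y) (hfz : k ≤ (f z : ℕ)) : dist x z ≤ L * dist x y := by
  rcases hxy.lt_or_gt with h | h
  · have hxz : f x ≤ f z := by omega
    exact hf.dist_le x hx y hy h x hx z hz le_rfl hxz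
  · have hyz : f y ≤ f z := by omega
    rw [dist_comm x y]
    exact hf.dist_le y hy x hx h x hx z hz h.le hyz

end Layering

section JetBall

variable {m n d : ℕ}

/-- The set of tuples of polynomials whose derivatives at `x` of each order `k ≤ m - 1` are at
most `M * ρ ^ (m - k)`, that is `M` times the unit ball of jets at scale `ρ`. No bound on the degree
is included. -/
def jetBall (m : ℕ) {n d : ℕ} (x : En n) (ρ M : ℝ) : Set (Fin d → MvPolynomial (Fin n) ℝ) :=
  {Q | ∀ α : Fin n → ℕ, ∑ i, α i ≤ m - 1 → ∀ j,
    |polyPDval α (Q j) x| ≤ M * ρ ^ (m - ∑ i, α i)}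

variable {x y : En n} {ρ ρ' M M' : ℝ} {P Q : Fin d → MvPolynomial (Fin n) ℝ}

lemma convex_jetBall : Convex ℝ (jetBall m x ρ M : Set (Fin d → MvPolynomial (Fin n) ℝ)) := by
  have eq_iInter : (jetBall m x ρ M : Set (Fin d → MvPolynomial (Fin n) ℝ)) =
      ⋂ (α : Fin n → ℕ) (_ : ∑ i, α i ≤ m - 1) (j : Fin d),
        (polyPDvalₗ α x ∘ₗ LinearMap.proj j) ⁻¹'
          Metric.closedBall 0 (M * ρ ^ (m - ∑ i, α i)) := by
    ext Q
    simp [jetBall, polyPDvalₗ_apply]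
  rw [eq_iInter]
  exact convex_iInter₂ fun _ _ => convex_iInter fun j => (convex_closedBall _ _).linear_preimage _

lemma jetBall_mono (hρ : 0 ≤ ρ) (hρ' : ρ ≤ ρ') (hM : 0 ≤ M) (hM' : M ≤ M') :
    (jetBall m x ρ M : Set (Fin d → MvPolynomial (Fin n) ℝ)) ⊆ jetBall m x ρ' M' :=
  fun _ hQ α hα j => (hQ α hα j).trans (by gcongr; exact hM.trans hM')

lemma jetBall_mul_subset {L : ℝ} (hL : 1 ≤ L) (hρ : 0 ≤ ρ) (hM : 0 ≤ M) :
    (jetBall m x (L * ρ) M : Set (Fin d → MvPolynomial (Fin n) ℝ)) ⊆ jetBall m x ρ (L ^ m * M) := by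
  intro Q hQ α hα j
  calc |polyPDval α (Q j) x| ≤ M * (L * ρ) ^ (m - ∑ i, α i) := hQ α hα j
    _ = L ^ (m - ∑ i, α i) * M * ρ ^ (m - ∑ i, α i) := by ring
    _ ≤ L ^ m * M * ρ ^ (m - ∑ i, α i) := by gcongr; exact Nat.sub_le _ _

lemma sub_mem_jetBall (hP : P ∈ jetBall m x ρ M) (hQ : Q ∈ jetBall m x ρ M') :
    P - Q ∈ jetBall m x ρ (M + M') := by
  intro α hα j
  have polyPDval_sub : polyPDval α ((P - Q) j) x = polyPDval α (P j) x - polyPDval α (Q j) x :=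
    map_sub (polyPDvalₗ α x) _ _
  rw [polyPDval_sub, add_mul]
  exact (abs_sub _ _).trans (add_le_add (hP α hα j) (hQ α hα j))

/-- Downward induction on the order: the bound on `∂^α p` near `y` follows from the one at `y` and
the bounds on the first derivatives of `∂^α p`. -/
lemma abs_polyPDval_le_of_mem_closedBall {p : MvPolynomial (Fin n) ℝ} (hp : p.totalDegree < m)
    (hρ : 0 ≤ ρ) (hM : 0 ≤ M)
    (hy : ∀ α : Fin n → ℕ, ∑ i, α i ≤ m - 1 → |polyPDval α p y| ≤ M * ρ ^ (m - ∑ i, α i))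
    {k : ℕ} {α : Fin n → ℕ} (hα : ∑ i, α i + k = m) (hx : x ∈ Metric.closedBall y ρ) :
    |polyPDval α p x| ≤ (n + 1) ^ k * M * ρ ^ k := by
  induction k generalizing α x with
  | zero =>
    have : polyPD α p = 0 := polyPD_eq_zero_of_totalDegree_lt (by omega)
    simpa [polyPDval, this] using hM
  | succ k ih =>
    have hderiv : ∀ w ∈ Metric.closedBall y ρ, ∀ i,
        |MvPolynomial.eval (fun i => w i) (MvPolynomial.pderiv i (polyPD α p))| ≤
          (n + 1) ^ k * M * ρ ^ k := fun w hw i => by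
      rw [pderiv_polyPD]
      refine ih ?_ hw
      simp [Finset.sum_add_distrib]
      omega
    have increment : |polyPDval α p x - polyPDval α p y| ≤ n * ((n + 1) ^ k * M * ρ ^ k) * ρ := by
      refine (abs_eval_sub_le_of_abs_pderiv_le (convex_closedBall y ρ) hderiv hx
        (Metric.mem_closedBall_self hρ)).trans ?_
      rw [Fintype.card_fin]
      gcongr
      exact hx
    have base : |polyPDval α p y| ≤ (n + 1) ^ k * (M * ρ ^ (k + 1)) := by
      have h := hy α (by omega)
      rw [show m - ∑ i, α i = k + 1 by omega] at h
      exact h.trans (le_mul_of_one_le_left (by positivity) (one_le_pow₀ (by simp)))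
    calc |polyPDval α p x| ≤ |polyPDval α p x - polyPDval α p y| + |polyPDval α p y| := by
          simpa using abs_add_le (polyPDval α p x - polyPDval α p y) (polyPDval α p y)
      _ ≤ n * ((n + 1) ^ k * M * ρ ^ k) * ρ + (n + 1) ^ k * (M * ρ ^ (k + 1)) :=
        add_le_add increment base
      _ = (n + 1) ^ (k + 1) * M * ρ ^ (k + 1) := by ring

lemma mem_jetBall_of_dist_le (hdeg : ∀ j, (Q j).totalDegree < m) (hM : 0 ≤ M)
    (hxy : dist x y ≤ ρ) (hQ : Q ∈ jetBall m y ρ M) : Q ∈ jetBall m x ρ ((n + 1) ^ m * M) := by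
  intro α hα j
  have hm : 0 < m := (Nat.zero_le _).trans_lt (hdeg j)
  have hρ : 0 ≤ ρ := dist_nonneg.trans hxy
  refine (abs_polyPDval_le_of_mem_closedBall (hdeg j) hρ hM (fun β hβ => hQ β hβ j)
    (Nat.add_sub_of_le (by omega)) hxy).trans ?_
  gcongr
  exacts [by simp, Nat.sub_le _ _]

end JetBall

section WhitneyBall

variable {m n d : ℕ}

/-- The Whitney fields on `S` whose jets are of size `M` at unit scale and have differences of size
`M` at the scale of the distance between their base points; up to a factor `2`, the ball of radius
`M` of the Whitney norm. Pairs with `x = y` are harmless for `0 ≤ M` and spare case distinctions. -/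
def whitneyBall (m : ℕ) {n d : ℕ} (S : Finset (En n)) (M : ℝ) :
    Set (En n → Fin d → MvPolynomial (Fin n) ℝ) :=
  {P | (∀ x ∈ S, P x ∈ jetBall m x 1 M) ∧
    ∀ x ∈ S, ∀ y ∈ S, P x - P y ∈ jetBall m x (dist x y) M}

variable {S T : Finset (En n)} {M M' : ℝ} {P : En n → Fin d → MvPolynomial (Fin n) ℝ}
  {G : En n → Set (Fin d → MvPolynomial (Fin n) ℝ)}

lemma convex_whitneyBall :
    Convex ℝ (whitneyBall m S M : Set (En n → Fin d → MvPolynomial (Fin n) ℝ)) := by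
  let proj (x : En n) : (En n → Fin d → MvPolynomial (Fin n) ℝ) →ₗ[ℝ]
    Fin d → MvPolynomial (Fin n) ℝ := LinearMap.proj x
  have eq_iInter : (whitneyBall m S M : Set (En n → Fin d → MvPolynomial (Fin n) ℝ)) =
      (⋂ x ∈ S, proj x ⁻¹' jetBall m x 1 M) ∩
        ⋂ x ∈ S, ⋂ y ∈ S, (proj x - proj y) ⁻¹' jetBall m x (dist x y) M := by
    ext P
    simp [whitneyBall, proj]
  rw [eq_iInter]
  exact (convex_iInter₂ fun x _ => convex_jetBall.linear_preimage _).inter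
    (convex_iInter₂ fun x _ => convex_iInter₂ fun y _ => convex_jetBall.linear_preimage _)

lemma whitneyBall_mono (hM : 0 ≤ M) (hMM' : M ≤ M') (hTS : T ⊆ S) :
    (whitneyBall m S M : Set (En n → Fin d → MvPolynomial (Fin n) ℝ)) ⊆ whitneyBall m T M' :=
  fun _ hP => ⟨fun x hx => jetBall_mono zero_le_one le_rfl hM hMM' (hP.1 x (hTS hx)),
    fun x hx y hy =>
      jetBall_mono dist_nonneg le_rfl hM hMM' (hP.2 x (hTS hx) y (hTS hy))⟩

lemma finite_setOf_sum_le {ι : Type*} [Fintype ι] (k : ℕ) : {α : ι → ℕ | ∑ i, α i ≤ k}.Finite :=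
  (Set.finite_Iic fun _ : ι => k).subset fun _ hα i =>
    (Finset.single_le_sum (fun _ _ => Nat.zero_le _) (Finset.mem_univ i)).trans hα

lemma abs_polyPDval_le_WNormLow {x : En n} (hx : x ∈ S) {α : Fin n → ℕ} (hα : ∑ i, α i ≤ m - 1)
    (j : Fin d) : |polyPDval α (P x j) x| ≤ WNormLow m S P := by
  refine le_csSup ?_ ⟨x, hx, α, hα, j, rfl⟩
  refine (((S.finite_toSet.prod ((finite_setOf_sum_le (m - 1)).prod Set.finite_univ)).image
    fun t : En n × (Fin n → ℕ) × Fin d => |polyPDval t.2.1 (P t.1 t.2.2) t.1|).subset ?_).bddAbove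
  rintro _ ⟨x, hx, α, hα, j, rfl⟩
  exact ⟨(x, α, j), ⟨hx, hα, trivial⟩, rfl⟩

lemma abs_polyPDval_sub_div_le_WNormHomog {x y : En n} (hx : x ∈ S) (hy : y ∈ S) (hxy : x ≠ y)
    {α : Fin n → ℕ} (hα : ∑ i, α i ≤ m - 1) (j : Fin d) :
    |polyPDval α (P x j - P y j) x| / dist x y ^ (m - ∑ i, α i) ≤ WNormHomog m S P := by
  refine le_csSup ?_ ⟨x, hx, y, hy, hxy, α, hα, j, rfl⟩
  refine (((S.finite_toSet.prod (S.finite_toSet.prod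
    ((finite_setOf_sum_le (m - 1)).prod Set.finite_univ))).image
    fun t : En n × En n × (Fin n → ℕ) × Fin d =>
      |polyPDval t.2.2.1 (P t.1 t.2.2.2 - P t.2.1 t.2.2.2) t.1| /
        dist t.1 t.2.1 ^ (m - ∑ i, t.2.2.1 i)).subset ?_).bddAbove
  rintro _ ⟨x, hx, y, hy, -, α, hα, j, rfl⟩
  exact ⟨(x, y, α, j), ⟨hx, hy, hα, trivial⟩, rfl⟩

lemma WNormLow_nonneg : 0 ≤ WNormLow m S P :=
  Real.sSup_nonneg (by rintro _ ⟨x, -, α, -, j, rfl⟩; positivity)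

lemma WNormHomog_nonneg : 0 ≤ WNormHomog m S P :=
  Real.sSup_nonneg (by rintro _ ⟨x, -, y, -, -, α, -, j, rfl⟩; positivity)

lemma WNormFull_nonneg : 0 ≤ WNormFull m S P := add_nonneg WNormLow_nonneg WNormHomog_nonneg

lemma mem_whitneyBall_WNormFull : P ∈ whitneyBall m S (WNormFull m S P) := by
  refine ⟨fun x hx α hα j => ?_, fun x hx y hy α hα j => ?_⟩
  · rw [one_pow, mul_one]
    exact (abs_polyPDval_le_WNormLow hx hα j).trans
      (le_add_of_nonneg_right WNormHomog_nonneg)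
  · rcases eq_or_ne x y with rfl | hxy
    · rw [sub_self, show polyPDval α ((0 : Fin d → MvPolynomial (Fin n) ℝ) j) x = 0 from
        map_zero (polyPDvalₗ α x), abs_zero]
      exact mul_nonneg WNormFull_nonneg (by positivity)
    · exact (div_le_iff₀ (pow_pos (dist_pos.mpr hxy) _)).mp
        ((abs_polyPDval_sub_div_le_WNormHomog hx hy hxy hα j).trans
          (le_add_of_nonneg_left WNormLow_nonneg))

lemma WNormFull_le (hM : 0 ≤ M) (hP : P ∈ whitneyBall m S M) : WNormFull m S P ≤ 2 * M := by
  have low_le : WNormLow m S P ≤ M := Real.sSup_le (by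
    rintro _ ⟨x, hx, α, hα, j, rfl⟩
    simpa using hP.1 x hx α hα j) hM
  have homog_le : WNormHomog m S P ≤ M := Real.sSup_le (by
    rintro _ ⟨x, hx, y, hy, hxy, α, hα, j, rfl⟩
    exact (div_le_iff₀ (pow_pos (dist_pos.mpr hxy) _)).mpr (hP.2 x hx y hy α hα j)) hM
  rw [WNormFull, two_mul]
  exact add_le_add low_le homog_le

lemma selNormFull_nonneg : 0 ≤ selNormFull m S G :=
  Real.sInf_nonneg (by rintro _ ⟨P, -, rfl⟩; exact WNormFull_nonneg)

lemma selNormFull_le (hM : 0 ≤ M) (hP : P ∈ (S : Set (En n)).pi G ∩ whitneyBall m S M) :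
    selNormFull m S G ≤ 2 * M := by
  calc selNormFull m S G ≤ WNormFull m S P :=
        csInf_le ⟨0, by rintro _ ⟨Q, -, rfl⟩; exact WNormFull_nonneg⟩ ⟨P, hP.1, rfl⟩
    _ ≤ 2 * M := WNormFull_le hM hP.2

lemma exists_mem_pi_inter_whitneyBall (hG : ∀ x ∈ S, (G x).Nonempty) (hM : selNormFull m S G < M) :
    ((S : Set (En n)).pi G ∩ whitneyBall m S M).Nonempty := by
  choose! P₀ hP₀ using hG
  obtain ⟨_, ⟨P, hPG, rfl⟩, hPM⟩ := exists_lt_of_csInf_lt (by exact ⟨_, P₀, hP₀, rfl⟩) hM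
  exact ⟨P, hPG, whitneyBall_mono WNormFull_nonneg hPM.le subset_rfl mem_whitneyBall_WNormFull⟩

end WhitneyBall

section Radon

/-- Radon's theorem for the points `p i`, with the convex weights remembered by applying them to the
auxiliary family `P i` as well. -/
lemma exists_mem_convexHull_image_mem_convexHull_image_compl {ι E V : Type*} [Fintype ι]
    [AddCommGroup E] [Module ℝ E] [AddCommGroup V] [Module ℝ V] [FiniteDimensional ℝ V]
    (hcard : Module.finrank ℝ V + 1 < Fintype.card ι) (P : ι → E) (p : ι → V) :
    ∃ (A : Set ι) (Q Q' : E) (q : V),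
      (Q, q) ∈ convexHull ℝ ((fun i => (P i, p i)) '' A) ∧
      (Q', q) ∈ convexHull ℝ ((fun i => (P i, p i)) '' Aᶜ) := by
  have not_affineIndependent : ¬ AffineIndependent ℝ p := fun h =>
    (h.card_le_finrank_succ.trans (Nat.succ_le_succ (Submodule.finrank_le _))).not_gt hcard
  obtain ⟨A, q, hq, hq'⟩ := Convex.radon_partition not_affineIndependent
  have lift {B : Set ι} (h : q ∈ convexHull ℝ (p '' B)) :
      ∃ Q, (Q, q) ∈ convexHull ℝ ((fun i => (P i, p i)) '' B) := by
    have image_snd : p '' B = LinearMap.snd ℝ E V '' ((fun i => (P i, p i)) '' B) := by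
      simp only [Set.image_image, LinearMap.snd_apply]
    rw [image_snd, ← LinearMap.image_convexHull] at h
    obtain ⟨⟨Q, _⟩, hQ, rfl⟩ := h
    exact ⟨Q, hQ⟩
  obtain ⟨Q, hQ⟩ := lift hq
  obtain ⟨Q', hQ'⟩ := lift hq'
  exact ⟨A, Q, Q', q, hQ, hQ'⟩

end Radon

section Gluing

variable {m n d : ℕ} {S T T' : Finset (En n)} {L M : ℝ}
  {G : En n → Set (Fin d → MvPolynomial (Fin n) ℝ)}

/-- Pairs of a Whitney field `Q` on `T` and a single tuple `q` of polynomials, the anchor, such that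
`Q x` differs from `q` by a jet of size `M` at the scale `L * dist x y`, for every `y ∈ T'`. -/
def anchoredWhitneyBall (m : ℕ) {n d : ℕ} (T T' : Finset (En n)) (L M : ℝ) :
    Set ((En n → Fin d → MvPolynomial (Fin n) ℝ) × (Fin d → MvPolynomial (Fin n) ℝ)) :=
  {W | W.1 ∈ whitneyBall m T M ∧
    ∀ x ∈ T, ∀ y ∈ T', W.1 x - W.2 ∈ jetBall m x (L * dist x y) M}

lemma convex_anchoredWhitneyBall : Convex ℝ (anchoredWhitneyBall m T T' L M :
    Set ((En n → Fin d → MvPolynomial (Fin n) ℝ) × (Fin d → MvPolynomial (Fin n) ℝ))) := by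
  let diff (x : En n) : (En n → Fin d → MvPolynomial (Fin n) ℝ) × (Fin d → MvPolynomial (Fin n) ℝ)
      →ₗ[ℝ] Fin d → MvPolynomial (Fin n) ℝ :=
    LinearMap.proj x ∘ₗ LinearMap.fst ℝ _ _ - LinearMap.snd ℝ _ _
  have eq_inter : (anchoredWhitneyBall m T T' L M :
      Set ((En n → Fin d → MvPolynomial (Fin n) ℝ) × (Fin d → MvPolynomial (Fin n) ℝ))) =
      LinearMap.fst ℝ _ _ ⁻¹' whitneyBall m T M ∩
        ⋂ x ∈ T, ⋂ y ∈ T', diff x ⁻¹' jetBall m x (L * dist x y) M := by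
    ext W
    simp [anchoredWhitneyBall, diff]
  rw [eq_inter]
  exact (convex_whitneyBall.linear_preimage _).inter
    (convex_iInter₂ fun x _ => convex_iInter₂ fun y _ => convex_jetBall.linear_preimage _)

/-- The factor lost when two Whitney fields with a common anchor are glued: `(n + 1) ^ m` comes from
moving the base point of a jet and `L ^ m` from changing its scale. -/
def gluingConst (m n : ℕ) (L : ℝ) : ℝ := L ^ m * (1 + (n + 1) ^ m)

lemma one_le_gluingConst (m n : ℕ) (hL : 1 ≤ L) : 1 ≤ gluingConst m n L :=
  one_le_mul_of_one_le_of_one_le (one_le_pow₀ hL) (le_add_of_nonneg_right (by positivity))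

variable {Q₁ Q₂ : En n → Fin d → MvPolynomial (Fin n) ℝ} {q : Fin d → MvPolynomial (Fin n) ℝ}

lemma sub_mem_jetBall_of_mem_anchoredWhitneyBall (hL : 1 ≤ L) (hM : 0 ≤ M)
    (h₁ : (Q₁, q) ∈ anchoredWhitneyBall m T T' L M) (h₂ : (Q₂, q) ∈ anchoredWhitneyBall m T' T L M)
    {x y : En n} (hx : x ∈ T) (hy : y ∈ T') (hdeg : ∀ j, ((Q₂ y - q) j).totalDegree < m) :
    Q₁ x - Q₂ y ∈ jetBall m x (dist x y) (gluingConst m n L * M) := by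
  have hxy : dist x y ≤ L * dist x y := le_mul_of_one_le_left dist_nonneg hL
  have near_x : Q₁ x - q ∈ jetBall m x (L * dist x y) M := h₁.2 x hx y hy
  have near_y : Q₂ y - q ∈ jetBall m x (L * dist x y) ((n + 1) ^ m * M) := by
    refine mem_jetBall_of_dist_le hdeg hM hxy ?_
    rw [dist_comm]
    exact h₂.2 y hy x hx
  have const_eq : gluingConst m n L * M = L ^ m * (M + (n + 1) ^ m * M) := by
    rw [gluingConst]
    ring
  rw [const_eq, ← sub_sub_sub_cancel_right _ _ q]
  exact jetBall_mul_subset hL dist_nonneg (by positivity) (sub_mem_jetBall near_x near_y)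

lemma piecewise_mem_whitneyBall (hL : 1 ≤ L) (hM : 0 ≤ M) (hST : S ⊆ T ∪ T')
    (h₁ : (Q₁, q) ∈ anchoredWhitneyBall m T T' L M) (h₂ : (Q₂, q) ∈ anchoredWhitneyBall m T' T L M)
    (hdeg₁ : ∀ x ∈ T, ∀ j, ((Q₁ x - q) j).totalDegree < m)
    (hdeg₂ : ∀ y ∈ T', ∀ j, ((Q₂ y - q) j).totalDegree < m) :
    T.piecewise Q₁ Q₂ ∈ whitneyBall m S (gluingConst m n L * M) := by
  have hM_le : M ≤ gluingConst m n L * M := le_mul_of_one_le_left hM (one_le_gluingConst m n hL)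
  have h₁' := whitneyBall_mono hM hM_le subset_rfl h₁.1
  have h₂' := whitneyBall_mono hM hM_le subset_rfl h₂.1
  have mem_right {x : En n} (hx : x ∈ S) (hxT : x ∉ T) : x ∈ T' :=
    (Finset.mem_union.mp (hST hx)).resolve_left hxT
  refine ⟨fun x hx => ?_, fun x hx y hy => ?_⟩
  · by_cases hxT : x ∈ T
    · simpa only [Finset.piecewise_eq_of_mem _ _ _ hxT] using h₁'.1 x hxT
    · simpa only [Finset.piecewise_eq_of_notMem _ _ _ hxT] using h₂'.1 x (mem_right hx hxT)
  · by_cases hxT : x ∈ T <;> by_cases hyT : y ∈ T <;>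
      simp only [Finset.piecewise_eq_of_mem, Finset.piecewise_eq_of_notMem, hxT, hyT,
        not_false_eq_true]
    · exact h₁'.2 x hxT y hyT
    · exact sub_mem_jetBall_of_mem_anchoredWhitneyBall hL hM h₁ h₂ hxT (mem_right hy hyT)
        (hdeg₂ y (mem_right hy hyT))
    · exact sub_mem_jetBall_of_mem_anchoredWhitneyBall hL hM h₂ h₁ (mem_right hx hxT) hyT
        (hdeg₁ y hyT)
    · exact h₂'.2 x (mem_right hx hxT) y (mem_right hy hyT)

lemma totalDegree_sub_lt {R σ : Type*} [CommRing R] {p q : MvPolynomial σ R} {m : ℕ} (hm : 1 ≤ m)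
    (hp : p.totalDegree ≤ m - 1) (hq : q.totalDegree ≤ m - 1) : (p - q).totalDegree < m :=
  (MvPolynomial.totalDegree_sub p q).trans_lt ((max_le hp hq).trans_lt (by omega))

lemma IsSeparatedLayering.mem_anchoredWhitneyBall {k : ℕ} {f : En n → Fin (k + 2)}
    (hf : IsSeparatedLayering S f L) (hM : 0 ≤ M) {i : Fin (k + 2)} {A : Set (Fin (k + 2))}
    (hi : i ∈ A) {P : En n → Fin d → MvPolynomial (Fin n) ℝ}
    (hP : P ∈ whitneyBall m (S.filter (f · ≠ i)) M) {z : En n} (hz : z ∈ S.filter (f · ≠ i))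
    (hfz : k ≤ (f z : ℕ)) :
    (P, P z) ∈ anchoredWhitneyBall m (S.filter (f · ∉ A)) (S.filter (f · ∈ A)) L M := by
  have subset_ne : S.filter (f · ∉ A) ⊆ S.filter (f · ≠ i) :=
    Finset.monotone_filter_right _ fun x _ hx h => hx (h ▸ hi)
  refine ⟨whitneyBall_mono hM le_rfl subset_ne hP, fun x hx y hy => ?_⟩
  obtain ⟨hxS, hxA⟩ := Finset.mem_filter.mp hx
  obtain ⟨hyS, hyA⟩ := Finset.mem_filter.mp hy
  have dist_le : dist x z ≤ L * dist x y :=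
    hf.dist_le_of_ne hxS hyS (Finset.mem_filter.mp hz).1 (fun h => hxA (h ▸ hyA)) hfz
  exact jetBall_mono dist_nonneg dist_le hM le_rfl (hP.2 x (subset_ne hx) z hz)

lemma IsSeparatedLayering.exists_mem_filter_ne {X : Type*} [MetricSpace X] {S : Finset X} {k : ℕ}
    {f : X → Fin (k + 2)} (hf : IsSeparatedLayering S f L) (i : Fin (k + 2)) :
    ∃ z ∈ S.filter (f · ≠ i), k ≤ (f z : ℕ) := by
  obtain ⟨l, hl, hli⟩ : ∃ l : Fin (k + 2), k ≤ (l : ℕ) ∧ l ≠ i := by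
    rcases eq_or_ne (Fin.last (k + 1)) i with h | h
    · exact ⟨(Fin.last k).castSucc, le_rfl, h ▸ (Fin.castSucc_lt_last _).ne⟩
    · exact ⟨Fin.last (k + 1), Nat.le_succ k, h⟩
  obtain ⟨z, hz, rfl⟩ := hf.surj l
  exact ⟨z, Finset.mem_filter.mpr ⟨hz, hli⟩, hl⟩

lemma finrank_pi_restrictTotalDegree (hm : 1 ≤ m) :
    Module.finrank ℝ (Fin d → MvPolynomial.restrictTotalDegree (Fin n) ℝ (m - 1)) =
      d * (n + m - 1).choose n := by
  rw [Module.finrank_pi_fintype, Nat.add_sub_assoc hm, Nat.choose_symm_add]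
  simp [finrank_restrictTotalDegree]

lemma IsSeparatedLayering.average_mem (hM : 0 ≤ M) {k : ℕ} {f : En n → Fin (k + 2)}
    (hf : IsSeparatedLayering S f L) (hconv : ∀ x ∈ S, Convex ℝ (G x))
    {P : Fin (k + 2) → En n → Fin d → MvPolynomial (Fin n) ℝ}
    (hP : ∀ i, P i ∈ (S.filter (f · ≠ i) : Set (En n)).pi G ∩
      whitneyBall m (S.filter (f · ≠ i)) M)
    {z : Fin (k + 2) → En n} (hz : ∀ i, z i ∈ S.filter (f · ≠ i)) (hfz : ∀ i, k ≤ (f (z i) : ℕ))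
    {A : Set (Fin (k + 2))} {Q : En n → Fin d → MvPolynomial (Fin n) ℝ}
    {q : Fin d → MvPolynomial (Fin n) ℝ}
    (hQ : (Q, q) ∈ convexHull ℝ ((fun i => (P i, P i (z i))) '' A)) :
    Q ∈ (S.filter (f · ∉ A) : Set (En n)).pi G ∧
      (Q, q) ∈ anchoredWhitneyBall m (S.filter (f · ∉ A)) (S.filter (f · ∈ A)) L M := by
  have convex_pi_G : Convex ℝ ((S.filter (f · ∉ A) : Set (En n)).pi G) :=
    convex_pi fun x hx => hconv x (Finset.mem_filter.mp hx).1
  refine convexHull_min ?_ ((convex_pi_G.linear_preimage (LinearMap.fst ℝ _ _)).inter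
    convex_anchoredWhitneyBall) hQ
  rintro _ ⟨i, hi, rfl⟩
  refine ⟨fun x hx => ?_, hf.mem_anchoredWhitneyBall hM hi (hP i).2 (hz i) (hfz i)⟩
  obtain ⟨hxS, hxA⟩ := Finset.mem_filter.mp hx
  exact (hP i).1 x (Finset.mem_filter.mpr ⟨hxS, fun h => hxA (h ▸ hi)⟩)

/-- Fields missing one level each are averaged into a field on all of `S`: the values
`P i (z i)` at points of the two top levels have a Radon point, whose two sets of weights give an
average defined off the levels in `A` and one defined on them. -/
lemma IsSeparatedLayering.nonempty_pi_inter_whitneyBall (hm : 1 ≤ m) (hL : 1 ≤ L) (hM : 0 ≤ M)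
    {k : ℕ} (hk : d * (n + m - 1).choose n ≤ k) {f : En n → Fin (k + 2)}
    (hf : IsSeparatedLayering S f L) (hconv : ∀ x ∈ S, Convex ℝ (G x))
    (hdeg : ∀ x ∈ S, ∀ P ∈ G x, ∀ j, (P j).totalDegree ≤ m - 1)
    (h : ∀ i, ((S.filter (f · ≠ i) : Set (En n)).pi G ∩
      whitneyBall m (S.filter (f · ≠ i)) M).Nonempty) :
    ((S : Set (En n)).pi G ∩ whitneyBall m S (gluingConst m n L * M)).Nonempty := by
  choose P hP using h
  choose z hz hfz using hf.exists_mem_filter_ne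
  let p (i : Fin (k + 2)) (j : Fin d) : MvPolynomial.restrictTotalDegree (Fin n) ℝ (m - 1) :=
    ⟨P i (z i) j, (MvPolynomial.mem_restrictTotalDegree _ _ _).mpr
      (hdeg _ (Finset.mem_filter.mp (hz i)).1 _ ((hP i).1 _ (hz i)) j)⟩
  obtain ⟨A, Q, Q', q, hQ, hQ'⟩ := exists_mem_convexHull_image_mem_convexHull_image_compl
    (by rw [finrank_pi_restrictTotalDegree hm, Fintype.card_fin]; omega) P p
  let incl := (MvPolynomial.restrictTotalDegree (Fin n) ℝ (m - 1)).subtype.compLeft (Fin d)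
  have map_incl {B : Set (Fin (k + 2))} {R : En n → Fin d → MvPolynomial (Fin n) ℝ}
      (hR : (R, q) ∈ convexHull ℝ ((fun i => (P i, p i)) '' B)) :
      (R, incl q) ∈ convexHull ℝ ((fun i => (P i, P i (z i))) '' B) := by
    have h := Set.mem_image_of_mem (LinearMap.id.prodMap incl) hR
    rwa [LinearMap.image_convexHull, Set.image_image] at h
  obtain ⟨hQG, hQW⟩ := hf.average_mem hM hconv hP hz hfz (map_incl hQ)
  obtain ⟨hQG', hQW'⟩ := hf.average_mem hM hconv hP hz hfz (map_incl hQ')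
  simp only [Set.mem_compl_iff, not_not] at hQG' hQW'
  have sub_incl_degree {x : En n} (hx : x ∈ S) {R : Fin d → MvPolynomial (Fin n) ℝ} (hR : R ∈ G x)
      (j : Fin d) : ((R - incl q) j).totalDegree < m :=
    totalDegree_sub_lt hm (hdeg x hx R hR j)
      ((MvPolynomial.mem_restrictTotalDegree _ _ _).mp (q j).2)
  refine ⟨(S.filter (f · ∉ A)).piecewise Q Q', fun x hx => ?_,
    piecewise_mem_whitneyBall hL hM (fun x hx => ?_) hQW hQW' (fun x hx => ?_) fun x hx => ?_⟩
  · by_cases hxA : f x ∈ A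
    · rw [Finset.piecewise_eq_of_notMem _ _ _ (by simp [hxA])]
      exact hQG' x (Finset.mem_filter.mpr ⟨hx, hxA⟩)
    · have hxT : x ∈ S.filter (f · ∉ A) := Finset.mem_filter.mpr ⟨hx, hxA⟩
      rw [Finset.piecewise_eq_of_mem _ _ _ hxT]
      exact hQG x hxT
  · rw [Finset.union_comm, Finset.filter_union_filter_not_eq]
    exact hx
  · exact sub_incl_degree (Finset.mem_filter.mp hx).1 (hQG x hx)
  · exact sub_incl_degree (Finset.mem_filter.mp hx).1 (hQG' x hx)

end Gluing

section Finiteness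

lemma exists_subset_card_le_of_forall_exists_ssubset {X : Type*} {Φ : Finset X → ℝ}
    (hΦ : ∀ T, 0 ≤ Φ T) {c : ℝ} (hc : 1 ≤ c) {p : ℕ} {S : Finset X}
    (step : ∀ T ⊆ S, p < T.card → ∃ T' ⊂ T, Φ T ≤ c * Φ T') :
    ∃ S' ⊆ S, S'.card ≤ p ∧ Φ S ≤ c ^ S.card * Φ S' := by
  induction S using Finset.strongInductionOn with
  | _ S ih =>
    rcases le_or_gt S.card p with hS | hS
    · exact ⟨S, subset_rfl, hS, le_mul_of_one_le_left (hΦ S) (one_le_pow₀ hc)⟩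
    obtain ⟨T, hTS, hT⟩ := step S subset_rfl hS
    obtain ⟨S', hS'T, hS', hΦS'⟩ := ih T hTS fun U hU => step U (hU.trans hTS.subset)
    refine ⟨S', hS'T.trans hTS.subset, hS', ?_⟩
    calc Φ S ≤ c * Φ T := hT
      _ ≤ c * (c ^ T.card * Φ S') := by gcongr
      _ = c ^ (T.card + 1) * Φ S' := by ring
      _ ≤ c ^ S.card * Φ S' := by
        gcongr
        exacts [hΦ S', Finset.card_lt_card hTS]

variable {m n d : ℕ} {S : Finset (En n)} {L : ℝ} {G : En n → Set (Fin d → MvPolynomial (Fin n) ℝ)}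

lemma exists_ssubset_selNormFull_le (hm : 1 ≤ m) (hS : S.card ≤ L)
    (hcard : 2 ^ (d * (n + m - 1).choose n) < S.card)
    (hG : ∀ x ∈ S, (G x).Nonempty ∧ Convex ℝ (G x) ∧ ∀ P ∈ G x, ∀ j, (P j).totalDegree ≤ m - 1) :
    ∃ T ⊂ S, selNormFull m S G ≤ 2 * gluingConst m n L * selNormFull m T G := by
  have hL : 1 ≤ L := hS.trans' (by exact_mod_cast Nat.one_le_two_pow.trans hcard.le)
  obtain ⟨f, hf⟩ := exists_isSeparatedLayering (k := d * (n + m - 1).choose n + 1) hS (by omega)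
  obtain ⟨i, hi⟩ := Finite.exists_max fun i => selNormFull m (S.filter (f · ≠ i)) G
  refine ⟨S.filter (f · ≠ i), ?_, ?_⟩
  · obtain ⟨x, hx, hfx⟩ := hf.surj i
    exact Finset.filter_ssubset.mpr ⟨x, hx, not_not.mpr hfx⟩
  have c_pos : 0 < 2 * gluingConst m n L := by linarith [one_le_gluingConst m n hL]
  rw [← div_le_iff₀' c_pos]
  refine le_of_forall_gt_imp_ge_of_dense fun M hM => ?_
  have hM_nonneg : 0 ≤ M := selNormFull_nonneg.trans hM.le
  obtain ⟨R, hR⟩ := hf.nonempty_pi_inter_whitneyBall hm hL hM_nonneg le_rfl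
    (fun x hx => (hG x hx).2.1) (fun x hx => (hG x hx).2.2) fun j =>
      exists_mem_pi_inter_whitneyBall (fun x hx => (hG x (Finset.mem_filter.mp hx).1).1)
        ((hi j).trans_lt hM)
  rw [div_le_iff₀' c_pos, mul_assoc]
  exact selNormFull_le
    (mul_nonneg (zero_le_one.trans (one_le_gluingConst m n hL)) hM_nonneg) hR

end Finiteness

theorem selection_norm_finiteness_full_general (m n D N : ℕ) (hm : 1 ≤ m) :
    ∃ C : ℝ, 0 < C ∧
      ∀ S : Finset (En n), S.card ≤ N →
      ∀ G : En n → Set (Fin D → MvPolynomial (Fin n) ℝ),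
        (∀ x ∈ S, (G x).Nonempty ∧ Convex ℝ (G x) ∧
          ∀ P ∈ G x, ∀ j, (P j).totalDegree ≤ m - 1) →
        ∃ S' : Finset (En n), S' ⊆ S ∧ S'.card ≤ 2 ^ (D * Nat.choose (n + m - 1) n) ∧
          selNormFull m S G ≤ C * selNormFull m S' G := by
  have one_le_c : 1 ≤ 2 * gluingConst m n (N + 1) := by
    linarith [one_le_gluingConst m n (L := (N + 1 : ℝ)) (by simp)]
  refine ⟨(2 * gluingConst m n (N + 1)) ^ N, by positivity, fun S hSN G hG => ?_⟩
  obtain ⟨S', hS'S, hS', hnorm⟩ := exists_subset_card_le_of_forall_exists_ssubset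
    (Φ := fun T => selNormFull m T G) (S := S) (fun _ => selNormFull_nonneg) one_le_c
    fun T hTS hT => exists_ssubset_selNormFull_le hm
      (by exact_mod_cast (Finset.card_le_card hTS).trans (hSN.trans N.le_succ)) hT
      fun x hx => hG x (hTS hx)
  refine ⟨S', hS'S, hS', hnorm.trans ?_⟩
  gcongr
  exact selNormFull_nonneg

/-- **Finiteness reduction for the inhomogeneous selection norm**: for `S` of at most `N`
points and diameter `≤ 1`, there is `S' ⊆ S` of at most `2^(dim 𝒫⃗)` points whose
selection norm controls that of `S`, with a constant depending only on `m, n, D, N`. -/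
theorem selection_norm_finiteness_full
    (m n D : ℕ) (hm : 1 ≤ m) (hn : 1 ≤ n) (hD : 1 ≤ D) (N : ℕ) (hN : 0 < N) :
    ∃ C : ℝ, 0 < C ∧
      ∀ S : Finset (En n), S.card ≤ N → (∀ x ∈ S, ∀ y ∈ S, dist x y ≤ 1) →
      ∀ G : En n → Set (Fin D → MvPolynomial (Fin n) ℝ),
        (∀ x ∈ S, (G x).Nonempty ∧ Convex ℝ (G x) ∧
          ∀ P ∈ G x, ∀ j, (P j).totalDegree ≤ m - 1) →
        ∃ S' : Finset (En n), S' ⊆ S ∧ S'.card ≤ 2 ^ (D * Nat.choose (n + m - 1) n) ∧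
          selNormFull m S G ≤ C * selNormFull m S' G := by
  obtain ⟨C, hC, h⟩ := selection_norm_finiteness_full_general m n D N hm
  exact ⟨C, hC, fun S hS _ => h S hS⟩
end
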